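/- arXiv:2309.00370 — 2 statements merged into one kernel-verified Lean document; each statement's English description precedes it below -/
import Mathlib

section
/- Let S be a subordinator with Laplace exponent φ ∈ I_o(0,1), and define Θ(t,λ) = λ ∫_0^∞ e^{−λr} P(S_r ≥ t) dr for t ≥ 0, λ > 0. Then Θ(t,λ) ≃ min(1, φ(t^{−1})/λ) for all t, λ > 0, with equivalence constants depending only on φ. -/
open Real MeasureTheory Set Filter ENNReal

/-- `s_φ(λ) = sup_{t>0} φ(λt)/φ(t)`, valued in `[0,∞]`. -/
noncomputable def sPhi (φ : ℝ → ℝ) (l : ℝ) : ℝ≥0∞ :=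
  ⨆ t ∈ Set.Ioi (0:ℝ), ENNReal.ofReal (φ (l * t) / φ t)

/-- `φ ∈ I(a,b)`: `s_φ(λ) = O(λ^a)` as `λ → 0` and `s_φ(λ) = O(λ^b)` as `λ → ∞`. -/
def memI (φ : ℝ → ℝ) (a b : ℝ) : Prop :=
  (∃ C > (0:ℝ), ∃ δ > (0:ℝ), ∀ l : ℝ, 0 < l → l < δ →
    sPhi φ l ≤ ENNReal.ofReal (C * l ^ a)) ∧
  (∃ C > (0:ℝ), ∃ M : ℝ, ∀ l : ℝ, M < l →
    sPhi φ l ≤ ENNReal.ofReal (C * l ^ b))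

/-- `φ ∈ I_o(a,b)`: `s_φ(λ) = o(λ^a)` as `λ → 0` and `s_φ(λ) = o(λ^b)` as `λ → ∞`. -/
def memIo (φ : ℝ → ℝ) (a b : ℝ) : Prop :=
  (∀ ε > (0:ℝ), ∃ δ > (0:ℝ), ∀ l : ℝ, 0 < l → l < δ →
    sPhi φ l ≤ ENNReal.ofReal (ε * l ^ a)) ∧
  (∀ ε > (0:ℝ), ∃ M : ℝ, ∀ l : ℝ, M < l →
    sPhi φ l ≤ ENNReal.ofReal (ε * l ^ b))

/-- `Θ(t,λ) = λ ∫_0^∞ e^{−λr} P(S_r ≥ t) dr`. -/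
noncomputable def Theta {Ω : Type*} [MeasurableSpace Ω] (P : Measure Ω)
    (S : ℝ → Ω → ℝ) (t l : ℝ) : ℝ :=
  l * ∫ r in Set.Ioi (0:ℝ), Real.exp (-(l * r)) * (P {ω | t ≤ S r ω}).toReal

/-! Let `T` be exponential of rate `l`, independent of `S`. Then `Θ(t, l) = P(S_T ≥ t)`, while
`1 - E[e^{-x S_T}] = q(φ(x) / l)` with `q y = y / (1 + y)`, and `q y` is comparable to `min 1 y`.
For any nonnegative random variable `X`, the Laplace transform controls the tail from both sides:
`P(X ≥ t) ≤ 2 (1 - E[e^{-X / t}])`, and, for every `ε > 0`,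
`P(X ≥ t) ≥ (1 - E[e^{-ε X / t}]) - 2 ε (1 - E[e^{-X / t}])`.
Taking `X = S_T`, the first bound gives the upper estimate. For the lower one choose `ε = N⁻¹` with
`φ(N x) ≤ (N / 4) φ(x)`: then `q(φ(ε / t) / l) ≥ 4 ε q(φ(1 / t) / l)`, which beats the error term.
Such an `N` is a power of any `m > 1` with `s_φ(m) < m`. -/

section Elementary

lemma div_one_add_le_min_one {y : ℝ} (hy : 0 ≤ y) : y / (1 + y) ≤ min 1 y :=
  le_min ((div_le_one (by positivity)).2 (by linarith)) (div_le_self hy (by linarith))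

lemma min_one_le_two_mul_div_one_add {y : ℝ} (hy : 0 ≤ y) : min 1 y ≤ 2 * (y / (1 + y)) := by
  rw [← mul_div_assoc, le_div_iff₀ (by positivity)]
  rcases le_total 1 y with h | h
  · rw [min_eq_left h]
    linarith
  · rw [min_eq_right h]
    nlinarith

lemma mul_min_one_le_div_one_add_sub {ε a b : ℝ} (hε : 0 ≤ ε) (hb : 0 ≤ b) (hba : b ≤ a)
    (hab : 4 * ε * a ≤ b) : ε * min 1 a ≤ b / (1 + b) - 2 * ε * (a / (1 + a)) := by
  have hmain : 4 * ε * (a / (1 + a)) ≤ b / (1 + b) :=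
    calc 4 * ε * (a / (1 + a)) = 4 * ε * a / (1 + a) := by ring
      _ ≤ b / (1 + b) := by gcongr
  linarith [mul_le_mul_of_nonneg_left (min_one_le_two_mul_div_one_add (hb.trans hba)) hε]

lemma div_one_add_le_one_sub_exp_neg {y : ℝ} (hy : -1 < y) : y / (1 + y) ≤ 1 - exp (-y) := by
  have hy' : 0 < 1 + y := by linarith
  have hexp : exp (-y) ≤ (1 + y)⁻¹ := by
    rw [exp_neg]
    exact inv_anti₀ hy' (by linarith [add_one_le_exp y])
  have hsplit : y / (1 + y) = 1 - (1 + y)⁻¹ := by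
    field_simp
    ring
  linarith

lemma min_one_le_two_mul_one_sub_exp_neg {y : ℝ} (hy : 0 ≤ y) :
    min 1 y ≤ 2 * (1 - exp (-y)) :=
  (min_one_le_two_mul_div_one_add hy).trans
    (mul_le_mul_of_nonneg_left (div_one_add_le_one_sub_exp_neg (by linarith)) zero_le_two)

lemma indicator_Ici_le_two_mul_one_sub_exp_neg {t x : ℝ} (ht : 0 < t) (hx : 0 ≤ x) :
    (Ici t).indicator 1 x ≤ 2 * (1 - exp (-(t⁻¹ * x))) := by
  have hy : 0 ≤ t⁻¹ * x := by positivity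
  refine le_trans (indicator_apply_le' (fun h => ?_) fun _ => ?_)
    (min_one_le_two_mul_one_sub_exp_neg hy)
  · exact le_min le_rfl ((one_le_inv_mul₀ ht).2 h)
  · exact le_min zero_le_one hy

lemma one_sub_exp_neg_sub_le_indicator_Ici {ε t x : ℝ} (hε : 0 ≤ ε) (ht : 0 < t) (hx : 0 ≤ x) :
    (1 - exp (-(ε * t⁻¹ * x))) - 2 * ε * (1 - exp (-(t⁻¹ * x))) ≤ (Ici t).indicator 1 x := by
  have hy : 0 ≤ t⁻¹ * x := by positivity
  rw [mul_assoc ε]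
  refine le_indicator_apply (fun _ => ?_) fun h => ?_
  · have hmul : 0 ≤ ε * (1 - exp (-(t⁻¹ * x))) :=
      mul_nonneg hε (sub_nonneg.2 (exp_le_one_iff.2 (by linarith)))
    rw [Pi.one_apply]
    linarith [exp_pos (-(ε * (t⁻¹ * x)))]
  · have hy1 : t⁻¹ * x ≤ 1 := (inv_mul_le_one₀ ht).2 (notMem_Ici.1 h).le
    have hmin := min_one_le_two_mul_one_sub_exp_neg hy
    rw [min_eq_right hy1] at hmin
    linarith [mul_le_mul_of_nonneg_left hmin hε, one_sub_le_exp_neg (ε * (t⁻¹ * x))]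

end Elementary

section Growth

variable {φ : ℝ → ℝ}

lemma map_mul_le_sPhi_toReal_mul {l x : ℝ} (hl : sPhi φ l ≠ ∞) (hx : 0 < x) (hφx : 0 < φ x) :
    φ (l * x) ≤ (sPhi φ l).toReal * φ x := by
  have hsup : ENNReal.ofReal (φ (l * x) / φ x) ≤ sPhi φ l :=
    le_iSup₂ (f := fun t (_ : t ∈ Ioi (0 : ℝ)) => ENNReal.ofReal (φ (l * t) / φ t)) x hx
  exact (div_le_iff₀ hφx).1 ((ofReal_le_iff_le_toReal hl).1 hsup)

lemma map_pow_mul_le {N c : ℝ} (hN : 0 < N) (hc : 0 ≤ c)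
    (h : ∀ x > 0, φ (N * x) ≤ c * φ x) (k : ℕ) {x : ℝ} (hx : 0 < x) :
    φ (N ^ k * x) ≤ c ^ k * φ x := by
  induction k with
  | zero => simp
  | succ k ih =>
    calc φ (N ^ (k + 1) * x) = φ (N * (N ^ k * x)) := by ring_nf
      _ ≤ c * φ (N ^ k * x) := h _ (by positivity)
      _ ≤ c * (c ^ k * φ x) := by gcongr
      _ = c ^ (k + 1) * φ x := by ring

lemma exists_map_mul_le_of_sPhi_lt (hφpos : ∀ x > 0, 0 < φ x) {N : ℝ} (hN : 1 < N)
    (hlt : sPhi φ N < ENNReal.ofReal N) {ε : ℝ} (hε : 0 < ε) :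
    ∃ M ≥ 1, ∀ x > 0, φ (M * x) ≤ ε * M * φ x := by
  have hN0 : 0 < N := by linarith
  set c := (sPhi φ N).toReal
  have hcN : c / N < 1 := (div_lt_one hN0).2 ((lt_ofReal_iff_toReal_lt hlt.ne_top).1 hlt)
  obtain ⟨k, hk⟩ := exists_pow_lt_of_lt_one hε hcN
  refine ⟨N ^ k, one_le_pow₀ hN.le, fun x hx => ?_⟩
  have hck : c ^ k ≤ ε * N ^ k := by
    rw [div_pow] at hk
    exact ((div_lt_iff₀ (by positivity)).1 hk).le
  calc φ (N ^ k * x) ≤ c ^ k * φ x :=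
        map_pow_mul_le hN0 toReal_nonneg
          (fun y hy => map_mul_le_sPhi_toReal_mul hlt.ne_top hy (hφpos y hy)) k hx
    _ ≤ ε * N ^ k * φ x := mul_le_mul_of_nonneg_right hck (hφpos x hx).le

lemma memIo.exists_sPhi_lt {a b : ℝ} (hφ : memIo φ a b) :
    ∃ N > 1, sPhi φ N < ENNReal.ofReal (N ^ b) := by
  obtain ⟨M, hM⟩ := hφ.2 (1 / 2) one_half_pos
  obtain ⟨N, hN⟩ := exists_gt (max 1 M)
  obtain ⟨hN1, hMN⟩ := max_lt_iff.1 hN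
  refine ⟨N, hN1, (hM N hMN).trans_lt ?_⟩
  have hNb : 0 < N ^ b := rpow_pos_of_pos (by linarith) b
  exact (ofReal_lt_ofReal_iff hNb).2 (by linarith)

end Growth

section Tail

open ProbabilityTheory

variable {Ω : Type*} [MeasurableSpace Ω] {μ : Measure Ω} {X : Ω → ℝ}

lemma integral_indicator_one_comp {s : Set ℝ} (hs : MeasurableSet s) (hX : AEMeasurable X μ) :
    ∫ ω, s.indicator 1 (X ω) ∂μ = μ.real (X ⁻¹' s) := by
  rw [← integral_map hX (stronglyMeasurable_one.indicator hs).aestronglyMeasurable,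
    integral_indicator_one hs, map_measureReal_apply_of_aemeasurable hX hs]

variable [IsFiniteMeasure μ]

lemma integrable_indicator_one_comp {s : Set ℝ} (hs : MeasurableSet s) (hX : AEMeasurable X μ) :
    Integrable (fun ω => s.indicator (1 : ℝ → ℝ) (X ω)) μ :=
  ((integrable_const (1 : ℝ)).indicator hs).comp_aemeasurable hX

lemma integrable_one_sub_exp_neg_mul (hX : AEMeasurable X μ) (hnonneg : 0 ≤ᵐ[μ] X) {x : ℝ}
    (hx : 0 ≤ x) : Integrable (fun ω => 1 - exp (-(x * X ω))) μ := by
  have hneg : ∀ᵐ ω ∂μ, (-X) ω ≤ 0 := hnonneg.mono fun ω h => neg_nonpos.2 h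
  have hexp : Integrable (fun ω => exp (-(x * X ω))) μ := by
    simpa using integrable_exp_mul_of_le x 0 hx hX.neg hneg
  exact (integrable_const 1).sub hexp

lemma measureReal_ge_le_two_mul_integral (hX : AEMeasurable X μ) (hnonneg : 0 ≤ᵐ[μ] X) {t : ℝ}
    (ht : 0 < t) :
    μ.real {ω | t ≤ X ω} ≤ 2 * ∫ ω, (1 - exp (-(t⁻¹ * X ω))) ∂μ := by
  have hdecay := integrable_one_sub_exp_neg_mul hX hnonneg (inv_nonneg.2 ht.le)
  calc μ.real {ω | t ≤ X ω} = ∫ ω, (Ici t).indicator 1 (X ω) ∂μ :=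
        (integral_indicator_one_comp measurableSet_Ici hX).symm
    _ ≤ ∫ ω, 2 * (1 - exp (-(t⁻¹ * X ω))) ∂μ :=
        integral_mono_ae (integrable_indicator_one_comp measurableSet_Ici hX) (hdecay.const_mul 2)
          (hnonneg.mono fun ω hω => indicator_Ici_le_two_mul_one_sub_exp_neg ht hω)
    _ = 2 * ∫ ω, (1 - exp (-(t⁻¹ * X ω))) ∂μ := integral_const_mul 2 _

lemma integral_sub_le_measureReal_ge (hX : AEMeasurable X μ) (hnonneg : 0 ≤ᵐ[μ] X) {ε t : ℝ}
    (hε : 0 ≤ ε) (ht : 0 < t) :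
    ∫ ω, (1 - exp (-(ε * t⁻¹ * X ω))) ∂μ - 2 * ε * ∫ ω, (1 - exp (-(t⁻¹ * X ω))) ∂μ ≤
      μ.real {ω | t ≤ X ω} := by
  have hdecay := integrable_one_sub_exp_neg_mul hX hnonneg (inv_nonneg.2 ht.le)
  have hdecay_ε := integrable_one_sub_exp_neg_mul hX hnonneg (mul_nonneg hε (inv_nonneg.2 ht.le))
  rw [← integral_const_mul, ← integral_sub hdecay_ε (hdecay.const_mul _)]
  calc _ ≤ ∫ ω, (Ici t).indicator 1 (X ω) ∂μ :=
        integral_mono_ae (hdecay_ε.sub (hdecay.const_mul _))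
          (integrable_indicator_one_comp measurableSet_Ici hX)
          (hnonneg.mono fun ω hω => one_sub_exp_neg_sub_le_indicator_Ici hε ht hω)
    _ = μ.real {ω | t ≤ X ω} := integral_indicator_one_comp measurableSet_Ici hX

end Tail

section ExponentialTime

open ProbabilityTheory

lemma integral_expMeasure {E : Type*} [NormedAddCommGroup E] [NormedSpace ℝ E] {l : ℝ}
    (hl : 0 ≤ l) (f : ℝ → E) :
    ∫ r, f r ∂expMeasure l = l • ∫ r in Ioi 0, exp (-(l * r)) • f r := by
  have hdensity : ∀ r, (exponentialPDF l r).toReal • f r =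
      (Ici 0).indicator (fun r => l • exp (-(l * r)) • f r) r := by
    intro r
    rcases le_or_gt 0 r with hr | hr
    · rw [exponentialPDF_of_nonneg hr, toReal_ofReal (by positivity), mul_smul,
        indicator_of_mem (mem_Ici.2 hr)]
    · rw [exponentialPDF_of_neg hr, toReal_zero, zero_smul, indicator_of_notMem (notMem_Ici.2 hr)]
  calc ∫ r, f r ∂expMeasure l = ∫ r, (exponentialPDF l r).toReal • f r :=
        integral_withDensity_eq_integral_toReal_smul
          (measurable_exponentialPDFReal l).ennreal_ofReal (ae_of_all _ fun _ => ofReal_lt_top) f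
    _ = l • ∫ r in Ioi 0, exp (-(l * r)) • f r := by
        simp_rw [hdensity]
        rw [integral_indicator measurableSet_Ici, integral_Ici_eq_integral_Ioi, integral_smul]

lemma ae_pos_expMeasure (l : ℝ) : ∀ᵐ r ∂expMeasure l, 0 < r := by
  refine (ae_withDensity_iff (measurable_exponentialPDFReal l).ennreal_ofReal).2 ?_
  filter_upwards [Measure.ae_ne volume (0 : ℝ)] with r hr hpdf
  exact lt_of_le_of_ne (not_lt.1 fun h => hpdf (exponentialPDF_of_neg h)) hr.symm

lemma integral_exp_neg_mul_expMeasure {l a : ℝ} (hl : 0 ≤ l) (hla : 0 < l + a) :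
    ∫ r, exp (-(r * a)) ∂expMeasure l = l / (l + a) := by
  have hexp : ∀ r : ℝ, exp (-(l * r)) • exp (-(r * a)) = exp (-(l + a) * r) := by
    intro r
    rw [smul_eq_mul, ← exp_add]
    ring_nf
  simp_rw [integral_expMeasure hl, hexp, integral_exp_mul_Ioi (neg_lt_zero.2 hla)]
  rw [mul_zero, exp_zero, neg_div_neg_eq, smul_eq_mul, mul_one_div]

variable {Ω : Type*} [MeasurableSpace Ω] {P : Measure Ω} [IsFiniteMeasure P] {S : ℝ → Ω → ℝ}

lemma Theta_eq_measureReal_prod (hmeas : Measurable (Function.uncurry S)) (t : ℝ) {l : ℝ}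
    (hl : 0 ≤ l) :
    Theta P S t l = ((expMeasure l).prod P).real {p | t ≤ Function.uncurry S p} := by
  have hset : MeasurableSet {p | t ≤ Function.uncurry S p} :=
    measurableSet_le measurable_const hmeas
  rw [measureReal_def, Measure.prod_apply hset,
    ← integral_toReal (measurable_measure_prodMk_left hset).aemeasurable
      (ae_of_all _ fun _ => measure_lt_top P _), integral_expMeasure hl]
  rfl

end ExponentialTime

/-- `φ` is the Laplace exponent of the nonnegative family `(S_r)_{r > 0}`, that is,
`E[e^{-x S_r}] = e^{-r φ(x)}`. Only the marginal laws of `S` are constrained, since `Θ` depends on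
nothing else. -/
structure HasLaplaceExponent {Ω : Type*} [MeasurableSpace Ω] (P : Measure Ω) (S : ℝ → Ω → ℝ)
    (φ : ℝ → ℝ) : Prop where
  nonneg : ∀ r > 0, ∀ᵐ ω ∂P, 0 ≤ S r ω
  laplace : ∀ r > 0, ∀ x > 0, ∫ ω, exp (-(x * S r ω)) ∂P = exp (-(r * φ x))

namespace HasLaplaceExponent

open ProbabilityTheory

variable {Ω : Type*} [MeasurableSpace Ω] {P : Measure Ω} {S : ℝ → Ω → ℝ} {φ : ℝ → ℝ}

lemma integrable_exp_neg_mul (hS : HasLaplaceExponent P S φ) {r x : ℝ} (hr : 0 < r) (hx : 0 < x) :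
    Integrable (fun ω => exp (-(x * S r ω))) P :=
  .of_integral_ne_zero ((hS.laplace r hr x hx).trans_ne (exp_ne_zero _))

lemma monotoneOn (hS : HasLaplaceExponent P S φ) : MonotoneOn φ (Ioi 0) := by
  intro x hx y hy hxy
  have hmono : ∫ ω, exp (-(y * S 1 ω)) ∂P ≤ ∫ ω, exp (-(x * S 1 ω)) ∂P := by
    refine integral_mono_ae (hS.integrable_exp_neg_mul one_pos hy)
      (hS.integrable_exp_neg_mul one_pos hx) ?_
    filter_upwards [hS.nonneg 1 one_pos] with ω hω
    gcongr
  rw [hS.laplace 1 one_pos y hy, hS.laplace 1 one_pos x hx, exp_le_exp] at hmono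
  linarith

lemma ae_nonneg_uncurry [SFinite P] (hS : HasLaplaceExponent P S φ)
    (hmeas : Measurable (Function.uncurry S)) (l : ℝ) :
    0 ≤ᵐ[(expMeasure l).prod P] Function.uncurry S :=
  (Measure.ae_prod_iff_ae_ae (measurableSet_le measurable_const hmeas)).2
    ((ae_pos_expMeasure l).mono hS.nonneg)

variable [IsProbabilityMeasure P]

lemma exponent_nonneg (hS : HasLaplaceExponent P S φ) {x : ℝ} (hx : 0 < x) : 0 ≤ φ x := by
  have hle : ∫ ω, exp (-(x * S 1 ω)) ∂P ≤ ∫ _, 1 ∂P := by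
    refine integral_mono_of_nonneg (ae_of_all _ fun ω => (exp_pos _).le) (integrable_const 1) ?_
    filter_upwards [hS.nonneg 1 one_pos] with ω hω
    exact exp_le_one_iff.2 (neg_nonpos.2 (mul_nonneg hx.le hω))
  rw [hS.laplace 1 one_pos x hx, integral_const, probReal_univ, one_smul, exp_le_one_iff] at hle
  linarith

lemma integral_one_sub_exp_neg_mul_uncurry (hS : HasLaplaceExponent P S φ)
    (hmeas : Measurable (Function.uncurry S)) {l x : ℝ} (hl : 0 < l) (hx : 0 < x) :
    ∫ p, (1 - exp (-(x * Function.uncurry S p))) ∂(expMeasure l).prod P =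
      φ x / l / (1 + φ x / l) := by
  have := isProbabilityMeasure_expMeasure hl
  have hφx := hS.exponent_nonneg hx
  have hlφ : 0 < l + φ x := by linarith
  have hexp := integral_exp_neg_mul_expMeasure hl.le hlφ
  have hdecay : Integrable (fun r => exp (-(r * φ x))) (expMeasure l) :=
    .of_integral_ne_zero (hexp.trans_ne (by positivity))
  rw [integral_prod _ (integrable_one_sub_exp_neg_mul hmeas.aemeasurable
    (hS.ae_nonneg_uncurry hmeas l) hx.le)]
  have hinner : ∀ r > 0, ∫ ω, (1 - exp (-(x * S r ω))) ∂P = 1 - exp (-(r * φ x)) := by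
    intro r hr
    rw [integral_sub (integrable_const 1) (hS.integrable_exp_neg_mul hr hx), hS.laplace r hr x hx,
      integral_const, probReal_univ, one_smul]
  calc ∫ r, ∫ ω, (1 - exp (-(x * S r ω))) ∂P ∂expMeasure l
      = ∫ r, (1 - exp (-(r * φ x))) ∂expMeasure l :=
        integral_congr_ae ((ae_pos_expMeasure l).mono hinner)
    _ = 1 - l / (l + φ x) := by
        rw [integral_sub (integrable_const 1) hdecay, hexp, integral_const, probReal_univ, one_smul]
    _ = φ x / l / (1 + φ x / l) := by
        field_simp
        ring

lemma Theta_le_two_mul_min (hS : HasLaplaceExponent P S φ)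
    (hmeas : Measurable (Function.uncurry S)) {t l : ℝ} (ht : 0 < t) (hl : 0 < l) :
    Theta P S t l ≤ 2 * min 1 (φ t⁻¹ / l) := by
  have := isProbabilityMeasure_expMeasure hl
  have hφt := hS.exponent_nonneg (inv_pos.2 ht)
  calc Theta P S t l = ((expMeasure l).prod P).real {p | t ≤ Function.uncurry S p} :=
        Theta_eq_measureReal_prod hmeas t hl.le
    _ ≤ 2 * ∫ p, (1 - exp (-(t⁻¹ * Function.uncurry S p))) ∂(expMeasure l).prod P :=
        measureReal_ge_le_two_mul_integral hmeas.aemeasurable (hS.ae_nonneg_uncurry hmeas l) ht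
    _ = 2 * (φ t⁻¹ / l / (1 + φ t⁻¹ / l)) := by
        rw [hS.integral_one_sub_exp_neg_mul_uncurry hmeas hl (inv_pos.2 ht)]
    _ ≤ 2 * min 1 (φ t⁻¹ / l) := by
        gcongr
        exact div_one_add_le_min_one (by positivity)

lemma sub_le_Theta (hS : HasLaplaceExponent P S φ)
    (hmeas : Measurable (Function.uncurry S)) {ε t l : ℝ} (hε : 0 < ε) (ht : 0 < t) (hl : 0 < l) :
    φ (ε * t⁻¹) / l / (1 + φ (ε * t⁻¹) / l) - 2 * ε * (φ t⁻¹ / l / (1 + φ t⁻¹ / l)) ≤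
      Theta P S t l := by
  have := isProbabilityMeasure_expMeasure hl
  have ht' := inv_pos.2 ht
  rw [Theta_eq_measureReal_prod hmeas t hl.le,
    ← hS.integral_one_sub_exp_neg_mul_uncurry hmeas hl ht',
    ← hS.integral_one_sub_exp_neg_mul_uncurry hmeas hl (mul_pos hε ht')]
  exact integral_sub_le_measureReal_ge hmeas.aemeasurable (hS.ae_nonneg_uncurry hmeas l) hε.le ht

lemma inv_mul_min_le_Theta (hS : HasLaplaceExponent P S φ)
    (hmeas : Measurable (Function.uncurry S)) {N : ℝ} (hN : 1 ≤ N)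
    (hgrowth : ∀ x > 0, φ (N * x) ≤ 1 / 4 * N * φ x) {t l : ℝ} (ht : 0 < t) (hl : 0 < l) :
    N⁻¹ * min 1 (φ t⁻¹ / l) ≤ Theta P S t l := by
  have hN0 : 0 < N := by linarith
  have ht' := inv_pos.2 ht
  have hNt : 0 < N⁻¹ * t⁻¹ := by positivity
  have hle : φ (N⁻¹ * t⁻¹) ≤ φ t⁻¹ :=
    hS.monotoneOn hNt ht' (mul_le_of_le_one_left ht'.le (inv_le_one_of_one_le₀ hN))
  have hge : 4 * N⁻¹ * φ t⁻¹ ≤ φ (N⁻¹ * t⁻¹) :=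
    calc 4 * N⁻¹ * φ t⁻¹ = 4 * N⁻¹ * φ (N * (N⁻¹ * t⁻¹)) := by rw [mul_inv_cancel_left₀ hN0.ne']
      _ ≤ 4 * N⁻¹ * (1 / 4 * N * φ (N⁻¹ * t⁻¹)) := by
          gcongr
          exact hgrowth _ hNt
      _ = φ (N⁻¹ * t⁻¹) := by field_simp
  refine le_trans ?_ (hS.sub_le_Theta hmeas (inv_pos.2 hN0) ht hl)
  refine mul_min_one_le_div_one_add_sub (inv_nonneg.2 hN0.le)
    (div_nonneg (hS.exponent_nonneg hNt) hl.le) (div_le_div_of_nonneg_right hle hl.le) ?_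
  rw [← mul_div_assoc]
  exact div_le_div_of_nonneg_right hge hl.le

end HasLaplaceExponent

theorem theta_equiv_min_general {φ : ℝ → ℝ} (hφpos : ∀ x > 0, 0 < φ x)
    (hφ : ∃ N > 1, sPhi φ N < ENNReal.ofReal N) :
    ∃ C > (0 : ℝ), ∀ {Ω : Type*} [MeasurableSpace Ω] (P : Measure Ω) [IsProbabilityMeasure P]
      (S : ℝ → Ω → ℝ), Measurable (Function.uncurry S) → HasLaplaceExponent P S φ →
      ∀ t > (0 : ℝ), ∀ l > (0 : ℝ),
        C⁻¹ * min 1 (φ t⁻¹ / l) ≤ Theta P S t l ∧ Theta P S t l ≤ C * min 1 (φ t⁻¹ / l) := by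
  obtain ⟨N, hN, hlt⟩ := hφ
  obtain ⟨M, hM, hgrowth⟩ := exists_map_mul_le_of_sPhi_lt hφpos hN hlt (ε := 1 / 4) (by norm_num)
  refine ⟨max 2 M, by positivity, fun P _ S hmeas hS t ht l hl => ?_⟩
  have hmin : 0 ≤ min 1 (φ t⁻¹ / l) :=
    le_min zero_le_one (div_nonneg (hφpos _ (inv_pos.2 ht)).le hl.le)
  constructor
  · calc (max 2 M)⁻¹ * min 1 (φ t⁻¹ / l) ≤ M⁻¹ * min 1 (φ t⁻¹ / l) := by
          gcongr
          exact le_max_right 2 M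
      _ ≤ Theta P S t l := hS.inv_mul_min_le_Theta hmeas hM hgrowth ht hl
  · calc Theta P S t l ≤ 2 * min 1 (φ t⁻¹ / l) := hS.Theta_le_two_mul_min hmeas ht hl
      _ ≤ max 2 M * min 1 (φ t⁻¹ / l) := by
          gcongr
          exact le_max_left 2 M

/-- for a subordinator `S` with Laplace exponent `φ ∈ I_o(0,1)`,
`Θ(t,λ) ≃ min(1, φ(t⁻¹)/λ)` for all `t, λ > 0`, with constants depending only on `φ`. -/
theorem theta_equiv_min
    {Ω : Type*} [MeasurableSpace Ω] (P : Measure Ω) [IsProbabilityMeasure P]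
    (S : ℝ → Ω → ℝ) (hmeas : Measurable (fun p : ℝ × Ω => S p.1 p.2))
    (φ : ℝ → ℝ) (hφpos : ∀ l ∈ Set.Ioi (0:ℝ), 0 < φ l) (hφ : memIo φ 0 1)
    (hzero : ∀ᵐ ω ∂P, S 0 ω = 0)
    (hnonneg : ∀ᵐ ω ∂P, ∀ t ≥ (0:ℝ), 0 ≤ S t ω)
    (hmono : ∀ᵐ ω ∂P, MonotoneOn (fun t => S t ω) (Set.Ici 0))
    (hstat : ∀ q p : ℝ, 0 ≤ q → q ≤ p →
      Measure.map (fun ω => S p ω - S q ω) P = Measure.map (S (p - q)) P)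
    (hlaplace : ∀ t ≥ (0:ℝ), ∀ l > (0:ℝ),
      (∫ ω, Real.exp (-(l * S t ω)) ∂P) = Real.exp (-(t * φ l))) :
    ∃ C > (0:ℝ), ∀ t > (0:ℝ), ∀ l > (0:ℝ),
      C⁻¹ * min 1 (φ t⁻¹ / l) ≤ Theta P S t l ∧
      Theta P S t l ≤ C * min 1 (φ t⁻¹ / l) := by
  obtain ⟨C, hC, h⟩ := theta_equiv_min_general hφpos (by simpa using hφ.exists_sPhi_lt)
  exact ⟨C, hC, h P S hmeas ⟨fun r hr => hnonneg.mono fun ω hω => hω r (le_of_lt hr),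
    fun r hr => hlaplace r (le_of_lt hr)⟩⟩
end

section
/- (Equivalence theorem for generalized real interpolation) Let (A₀,A₁) be an interpolation couple, φ ∈ I_o(0,1), p ∈ [1,∞]. Then the K-method space (A₀,A₁)^K_{φ,p} and the J-method space (A₀,A₁)^J_{φ,p} coincide as sets, with equivalent norms. -/
open Real MeasureTheory Set Filter ENNReal

section InterpolationCouple

variable {E A₀ A₁ : Type*} [AddCommGroup E]
  [NormedAddCommGroup A₀] [NormedAddCommGroup A₁]

/-- The `K`-functional of the couple `(A₀, A₁)` realized inside an ambient abelian
group `E` via additive embeddings `j₀, j₁`: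
`K(t,a) = inf{‖a₀‖ + t‖a₁‖ : a = j₀ a₀ + j₁ a₁}` (equal to `∞` if `a ∉ A₀ + A₁`). -/
noncomputable def Kfun (j₀ : A₀ →+ E) (j₁ : A₁ →+ E) (t : ℝ) (a : E) : ℝ≥0∞ :=
  ⨅ (q : A₀ × A₁) (_ : j₀ q.1 + j₁ q.2 = a), ENNReal.ofReal (‖q.1‖ + t * ‖q.2‖)

/-- The generalized `K`-method interpolation norm
`‖a‖_{(A₀,A₁)^K_{φ,p}} = ( ∫_0^∞ (φ(t⁻¹) K(t,a))^p dt/t )^{1/p}` (sup for `p = ∞`). -/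
noncomputable def interpNormK (φ : ℝ → ℝ) (p : ℝ≥0∞)
    (j₀ : A₀ →+ E) (j₁ : A₁ →+ E) (a : E) : ℝ≥0∞ :=
  if p = ∞ then ⨆ t ∈ Set.Ioi (0:ℝ), ENNReal.ofReal (φ t⁻¹) * Kfun j₀ j₁ t a
  else (∫⁻ t in Set.Ioi (0:ℝ),
      (ENNReal.ofReal (φ t⁻¹) * Kfun j₀ j₁ t a) ^ p.toReal / ENNReal.ofReal t) ^ p.toReal⁻¹

end InterpolationCouple

section Jmethod

variable {E A₀ A₁ : Type*} [AddCommGroup E]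
  [NormedAddCommGroup A₀] [NormedAddCommGroup A₁]

/-- The `J`-functional: for `a ∈ A₀ ∩ A₁` (given by a compatible pair),
`J(t,a) = max(‖a‖_{A₀}, t‖a‖_{A₁})`. -/
noncomputable def Jfun (t : ℝ) (x : A₀ × A₁) : ℝ := max ‖x.1‖ (t * ‖x.2‖)

/-- The generalized `J`-method interpolation norm, in its (equivalent) discrete form:
the infimum over all representations `a = ∑_{j∈ℤ} u_j` (with `u_j ∈ A₀ ∩ A₁`, the sum
converging in `A₀ + A₁`, i.e. w.r.t. `K(1,·)`) of the `ℓ_p`-norm of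
`j ↦ φ(2^{−j}) J(2^j, u_j)`. -/
noncomputable def interpNormJ (φ : ℝ → ℝ) (p : ℝ≥0∞)
    (j₀ : A₀ →+ E) (j₁ : A₁ →+ E) (a : E) : ℝ≥0∞ :=
  ⨅ (u : ℤ → A₀ × A₁) (_ : ∀ j, j₀ (u j).1 = j₁ (u j).2)
    (_ : Filter.Tendsto
      (fun N : ℕ => Kfun j₀ j₁ 1 (a - ∑ j ∈ Finset.Icc (-(N:ℤ)) (N:ℤ), j₀ (u j).1))
      Filter.atTop (nhds 0)),
    if p = ∞ then
      ⨆ j : ℤ, ENNReal.ofReal (φ ((2:ℝ) ^ (-j)) * Jfun ((2:ℝ) ^ j) (u j))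
    else
      (∑' j : ℤ,
        ENNReal.ofReal (φ ((2:ℝ) ^ (-j)) * Jfun ((2:ℝ) ^ j) (u j)) ^ p.toReal) ^ p.toReal⁻¹

end Jmethod

/-!
On the dyadic scale `t = 2ⁱ` the weight and the `K`-functional vary by bounded factors, so
`interpNormK` is equivalent to the `ℓ_p`-norm of `φ(2⁻ⁱ) K(2ⁱ, a)`.

* `K ≲ J`: for `u_j ∈ A₀ ∩ A₁` one has `K(2ⁱ, u_j) ≤ min(1, 2^{i-j}) J(2ʲ, u_j)`. Summing over `j`
  bounds the `K`-sequence by a convolution of the `J`-sequence with `s_φ(2ᵏ) min(1, 2⁻ᵏ)`, and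
  Young's inequality applies: this kernel is summable because `s_φ` is submultiplicative and
  `φ ∈ I_o(0,1)` makes some term less than `1` at either end, which forces geometric decay.
* `J ≲ K`: the differences of consecutive near-optimal decompositions `a = a₀(i) + a₁(i)` for
  `K(2ⁱ, a)` telescope to a representation of `a`. It converges since the decay of the same kernel
  gives `‖a₀(i)‖ → 0` as `i → -∞` and `‖a₁(i)‖ → 0` as `i → ∞`.
-/

section LpNorm

variable {α ι : Type*} {m : MeasurableSpace α} {μ : Measure α} {p : ℝ≥0∞}

lemma eLpNorm_iSup_le_of_directed [Countable ι] {f : ι → α → ℝ≥0∞}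
    (hf : ∀ i, AEMeasurable (f i) μ) (hdir : Directed (· ≤ ·) f) :
    eLpNorm (fun a => ⨆ i, f i a) p μ ≤ ⨆ i, eLpNorm (f i) p μ := by
  rcases eq_or_ne p 0 with rfl | hp0
  · simp only [eLpNorm_exponent_zero, zero_le]
  rcases eq_or_ne p ∞ with rfl | hpt
  · simp only [eLpNorm_exponent_top]
    refine eLpNormEssSup_le_of_ae_enorm_bound ?_
    filter_upwards [ae_all_iff.2 fun i => enorm_ae_le_eLpNormEssSup (f i) μ] with a ha
    exact iSup_mono ha
  · have hr : 0 < p.toReal := ENNReal.toReal_pos hp0 hpt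
    have hdir_rpow : Directed (· ≤ ·) fun i a => f i a ^ p.toReal :=
      fun i j => (hdir i j).imp fun _ h =>
        h.imp (fun hi a => ENNReal.rpow_le_rpow (hi a) hr.le)
          fun hj a => ENNReal.rpow_le_rpow (hj a) hr.le
    have rpow_iSup {r : ℝ} (hr : 0 < r) (x : ι → ℝ≥0∞) : (⨆ i, x i) ^ r = ⨆ i, x i ^ r :=
      (ENNReal.orderIsoRpow r hr).map_iSup x
    simp only [eLpNorm_eq_lintegral_rpow_enorm_toReal hp0 hpt, enorm_eq_self, rpow_iSup hr]
    rw [lintegral_iSup_directed (fun i => (hf i).pow_const _) hdir_rpow,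
      rpow_iSup (one_div_pos.2 hr)]

lemma eLpNorm_tsum_le [Countable ι] {f : ι → α → ℝ≥0∞} (hf : ∀ i, AEMeasurable (f i) μ)
    (hp : 1 ≤ p) : eLpNorm (fun a => ∑' i, f i a) p μ ≤ ∑' i, eLpNorm (f i) p μ := by
  have hdir : Directed (· ≤ ·) fun (s : Finset ι) a => ∑ i ∈ s, f i a :=
    Monotone.directed_le fun s t hst a => Finset.sum_le_sum_of_subset hst
  simp only [ENNReal.tsum_eq_iSup_sum]
  refine (eLpNorm_iSup_le_of_directed (fun s => Finset.aemeasurable_fun_sum s fun i _ => hf i)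
    hdir).trans (iSup_mono fun s => ?_)
  simpa only [Finset.sum_fn] using
    eLpNorm_sum_le (f := f) (s := s) (fun i _ => (hf i).aestronglyMeasurable) hp

lemma eLpNorm_count_tsum_mul_le {G : Type*} [AddGroup G] [Countable G] [MeasurableSpace G]
    [DiscreteMeasurableSpace G] (c x : G → ℝ≥0∞) (hp : 1 ≤ p) :
    eLpNorm (fun i => ∑' k, c k * x (i + k)) p .count ≤ (∑' k, c k) * eLpNorm x p .count := by
  refine (eLpNorm_tsum_le (fun _ => Measurable.of_discrete.aemeasurable) hp).trans ?_
  rw [← ENNReal.tsum_mul_right]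
  refine ENNReal.tsum_le_tsum fun k => ?_
  rw [← eLpNorm_comp_measurePreserving (Measurable.of_discrete.aestronglyMeasurable (f := x))
    (measurePreserving_add_right .count k)]
  exact eLpNorm_le_mul_eLpNorm_of_ae_le_mul'' p Measurable.of_discrete.aestronglyMeasurable
    (.of_forall fun i => le_rfl)

variable [MeasurableSpace ι] [MeasurableSingletonClass ι]

lemma eLpNorm_count_eq (hp : p ≠ 0) (x : ι → ℝ≥0∞) :
    eLpNorm x p .count =
      if p = ∞ then ⨆ i, x i else (∑' i, x i ^ p.toReal) ^ p.toReal⁻¹ := by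
  split_ifs with hpt
  · simp only [hpt, eLpNorm_exponent_top, eLpNormEssSup_count, enorm_eq_self]
  · simp only [eLpNorm_eq_lintegral_rpow_enorm_toReal hp hpt, enorm_eq_self, lintegral_count,
      one_div]

lemma exists_pos_eLpNorm_count_le [Countable ι] (p : ℝ≥0∞) {ε : ℝ≥0∞} (hε : ε ≠ 0) :
    ∃ x : ι → ℝ≥0∞, (∀ i, 0 < x i) ∧ eLpNorm x p .count ≤ ε := by
  rcases eq_or_ne p 0 with rfl | hp
  · exact ⟨fun _ => 1, fun _ => one_pos, by simp only [eLpNorm_exponent_zero, zero_le]⟩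
  rcases eq_or_ne p ∞ with rfl | hpt
  · exact ⟨fun _ => ε, fun _ => pos_iff_ne_zero.2 hε, by
      simpa only [eLpNorm_count_eq hp, if_true] using iSup_le fun _ => le_rfl⟩
  have hr : 0 < p.toReal := ENNReal.toReal_pos hp hpt
  obtain ⟨y, hy, hsum⟩ := ENNReal.exists_pos_sum_of_countable (ε := ε ^ p.toReal)
    (ENNReal.rpow_pos_of_nonneg (pos_iff_ne_zero.2 hε) hr.le).ne' ι
  refine ⟨fun i => (y i : ℝ≥0∞) ^ p.toReal⁻¹,
    fun i => ENNReal.rpow_pos (ENNReal.coe_pos.2 (hy i)) ENNReal.coe_ne_top, ?_⟩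
  simp only [eLpNorm_count_eq hp, if_neg hpt, ENNReal.rpow_inv_rpow hr.ne']
  exact (ENNReal.rpow_inv_le_iff hr).2 hsum.le

end LpNorm

lemma tsum_ne_top_of_submultiplicative {a : ℕ → ℝ≥0∞} (hfin : ∀ m, a m ≠ ∞)
    (hmul : ∀ m n, a (m + n) ≤ a m * a n) {n : ℕ} (hn : n ≠ 0) (han : a n < 1) :
    ∑' m, a m ≠ ∞ := by
  -- On each residue class modulo `n` the sequence is dominated by a geometric series.
  have : NeZero n := ⟨hn⟩
  have hpow (i k : ℕ) : a (i + n * k) ≤ a n ^ k * a i := by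
    induction k with
    | zero => simp
    | succ k ih =>
      calc a (i + n * (k + 1)) = a (n + (i + n * k)) := by congr 1; ring
        _ ≤ a n * a (i + n * k) := hmul _ _
        _ ≤ a n * (a n ^ k * a i) := by gcongr
        _ = a n ^ (k + 1) * a i := by ring
  have hle : ∑' m, a m ≤ (1 - a n)⁻¹ * ∑ i : Fin n, a i := by
    rw [← (Nat.divModEquiv n).symm.tsum_eq, ENNReal.tsum_prod', ← ENNReal.tsum_geometric,
      ← ENNReal.tsum_mul_right]
    refine ENNReal.tsum_le_tsum fun k => ?_
    rw [tsum_fintype, Finset.mul_sum]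
    refine Finset.sum_le_sum fun i _ => ?_
    simpa [add_comm, mul_comm] using hpow i k
  exact ne_top_of_le_ne_top (ENNReal.mul_ne_top (ENNReal.inv_ne_top.2 (tsub_pos_of_lt han).ne')
    (ENNReal.sum_ne_top.2 fun (i : Fin n) _ => hfin i)) hle

section DilationFunction

variable {φ : ℝ → ℝ} {b l t : ℝ}

lemma ofReal_le_sPhi_mul (ht : 0 < t) (hφt : 0 < φ t) :
    ENNReal.ofReal (φ (l * t)) ≤ sPhi φ l * ENNReal.ofReal (φ t) := by
  rw [← ENNReal.div_le_iff (ENNReal.ofReal_pos.2 hφt).ne' ENNReal.ofReal_ne_top,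
    ← ENNReal.ofReal_div_of_pos hφt]
  exact le_iSup₂ (f := fun t (_ : t ∈ Ioi (0 : ℝ)) => ENNReal.ofReal (φ (l * t) / φ t)) t ht

lemma sPhi_mul_le (hφpos : ∀ t, 0 < t → 0 < φ t) {m : ℝ} (hm : 0 < m) :
    sPhi φ (l * m) ≤ sPhi φ l * sPhi φ m := by
  refine iSup₂_le fun t ht => ?_
  rw [ENNReal.ofReal_div_of_pos (hφpos t ht), mul_assoc]
  refine ENNReal.div_le_of_le_mul ?_
  calc ENNReal.ofReal (φ (l * (m * t)))
      ≤ sPhi φ l * ENNReal.ofReal (φ (m * t)) :=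
        ofReal_le_sPhi_mul (mul_pos hm ht) (hφpos _ (mul_pos hm ht))
    _ ≤ sPhi φ l * (sPhi φ m * ENNReal.ofReal (φ t)) := by
        gcongr
        exact ofReal_le_sPhi_mul ht (hφpos t ht)
    _ = sPhi φ l * sPhi φ m * ENNReal.ofReal (φ t) := (mul_assoc _ _ _).symm

lemma one_le_sPhi_one (hφt : 0 < φ t) (ht : 0 < t) : 1 ≤ sPhi φ 1 := by
  have h : ENNReal.ofReal (φ (1 * t) / φ t) ≤ sPhi φ 1 :=
    le_iSup₂ (f := fun t (_ : t ∈ Ioi (0 : ℝ)) => ENNReal.ofReal (φ (1 * t) / φ t)) t ht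
  rwa [one_mul, div_self hφt.ne', ENNReal.ofReal_one] at h

lemma exists_forall_sPhi_le (hφpos : ∀ t, 0 < t → 0 < φ t) (hφ : memIo φ 0 b) (B : ℝ) :
    ∃ S ≠ ∞, ∀ l, 0 < l → l ≤ B → sPhi φ l ≤ S := by
  -- Factor `l = (l / L) * L` with `L` fixed and so large that `l / L` is small.
  obtain ⟨δ, hδ, hsmall⟩ := hφ.1 1 one_pos
  obtain ⟨M, hlarge⟩ := hφ.2 1 one_pos
  obtain ⟨L, hML, hL, hBL⟩ : ∃ L, M < L ∧ 0 < L ∧ B / δ < L :=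
    ((eventually_gt_atTop M).and ((eventually_gt_atTop 0).and (eventually_gt_atTop _))).exists
  refine ⟨sPhi φ L, ne_top_of_le_ne_top ENNReal.ofReal_ne_top (hlarge L hML), fun l hl hlB => ?_⟩
  have hlδ : l / L < δ :=
    (div_lt_comm₀ hδ hL).1 ((div_le_div_of_nonneg_right hlB hδ.le).trans_lt hBL)
  calc sPhi φ l = sPhi φ (l / L * L) := by rw [div_mul_cancel₀ l hL.ne']
    _ ≤ sPhi φ (l / L) * sPhi φ L := sPhi_mul_le hφpos hL
    _ ≤ 1 * sPhi φ L := by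
        gcongr
        simpa using hsmall (l / L) (div_pos hl hL) hlδ
    _ = sPhi φ L := one_mul _

lemma sPhi_ne_top (hφpos : ∀ t, 0 < t → 0 < φ t) (hφ : memIo φ 0 b) (hl : 0 < l) :
    sPhi φ l ≠ ∞ :=
  let ⟨_, hS, hle⟩ := exists_forall_sPhi_le hφpos hφ l
  ne_top_of_le_ne_top hS (hle l hl le_rfl)

/-- The kernel `s_φ(2ᵏ) min(1, 2⁻ᵏ)` of the discrete convolution that dominates the
`K`-functional by the `J`-functional along the dyadic scale. -/
noncomputable def dilationKernel (φ : ℝ → ℝ) (k : ℤ) : ℝ≥0∞ :=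
  sPhi φ (2 ^ k) * min 1 (ENNReal.ofReal (2 ^ (-k)))

lemma tsum_sPhi_inv_two_pow_ne_top (hφpos : ∀ t, 0 < t → 0 < φ t) (hφ : memIo φ 0 b) :
    ∑' m : ℕ, sPhi φ (2⁻¹ ^ m) ≠ ∞ := by
  obtain ⟨δ, hδ, hsmall⟩ := hφ.1 2⁻¹ (by norm_num)
  obtain ⟨n, hn, hnδ⟩ : ∃ n : ℕ, n ≠ 0 ∧ (2⁻¹ : ℝ) ^ n < δ :=
    ((eventually_ne_atTop 0).and ((_root_.tendsto_pow_atTop_nhds_zero_of_lt_one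
      (by norm_num) (by norm_num)).eventually_lt_const hδ)).exists
  refine tsum_ne_top_of_submultiplicative (fun m => sPhi_ne_top hφpos hφ (by positivity))
    (fun m n => ?_) hn ?_
  · rw [pow_add]
    exact sPhi_mul_le hφpos (by positivity)
  · refine (hsmall _ (by positivity) hnδ).trans_lt ?_
    rw [ENNReal.ofReal_lt_one, Real.rpow_zero]
    norm_num

lemma tsum_sPhi_two_pow_mul_ne_top (hφpos : ∀ t, 0 < t → 0 < φ t) (hφ : memIo φ 0 1) :
    ∑' m : ℕ, sPhi φ (2 ^ m) * ENNReal.ofReal (2⁻¹ ^ m) ≠ ∞ := by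
  obtain ⟨M, hlarge⟩ := hφ.2 2⁻¹ (by norm_num)
  obtain ⟨n, hn, hMn⟩ : ∃ n : ℕ, n ≠ 0 ∧ M < (2 : ℝ) ^ n :=
    ((eventually_ne_atTop 0).and ((tendsto_pow_atTop_atTop_of_one_lt
      (one_lt_two (α := ℝ))).eventually_gt_atTop M)).exists
  refine tsum_ne_top_of_submultiplicative
    (fun m => ENNReal.mul_ne_top (sPhi_ne_top hφpos hφ (by positivity)) ENNReal.ofReal_ne_top)
    (fun m n => ?_) hn ?_
  · rw [pow_add, pow_add, ENNReal.ofReal_mul (by positivity), mul_mul_mul_comm]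
    gcongr
    exact sPhi_mul_le hφpos (by positivity)
  · calc sPhi φ (2 ^ n) * ENNReal.ofReal (2⁻¹ ^ n)
        ≤ ENNReal.ofReal (2⁻¹ * (2 ^ n) ^ (1 : ℝ)) * ENNReal.ofReal (2⁻¹ ^ n) := by
          gcongr
          exact hlarge _ hMn
      _ = ENNReal.ofReal 2⁻¹ := by
          rw [← ENNReal.ofReal_mul (by positivity), Real.rpow_one, mul_assoc, ← mul_pow,
            mul_inv_cancel₀ two_ne_zero, one_pow, mul_one]
      _ < 1 := ENNReal.ofReal_lt_one.2 (by norm_num)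

lemma tsum_dilationKernel_ne_top (hφpos : ∀ t, 0 < t → 0 < φ t) (hφ : memIo φ 0 1) :
    ∑' k, dilationKernel φ k ≠ ∞ := by
  rw [tsum_of_nat_of_neg_add_one ENNReal.summable ENNReal.summable]
  refine ENNReal.add_ne_top.2
    ⟨ne_top_of_le_ne_top (tsum_sPhi_two_pow_mul_ne_top hφpos hφ) (ENNReal.tsum_le_tsum fun m => ?_),
      ne_top_of_le_ne_top (tsum_sPhi_inv_two_pow_ne_top hφpos hφ)
        ((ENNReal.tsum_le_tsum fun m => ?_).trans
          (ENNReal.tsum_comp_le_tsum_of_injective (add_left_injective 1) _))⟩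
  · rw [dilationKernel, zpow_neg, zpow_natCast, inv_pow]
    gcongr
    exact min_le_right _ _
  · rw [dilationKernel, show (2 : ℝ) ^ (-((m : ℤ) + 1)) = 2⁻¹ ^ (m + 1) by
      rw [zpow_neg, inv_pow]; norm_cast]
    exact mul_le_of_le_one_right' (min_le_left _ _)

lemma tsum_dilationKernel_ne_zero (hφt : 0 < φ t) (ht : 0 < t) : ∑' k, dilationKernel φ k ≠ 0 := by
  have hzero : dilationKernel φ 0 = sPhi φ 1 := by simp [dilationKernel]
  exact (zero_lt_one.trans_le
    (((one_le_sPhi_one hφt ht).trans_eq hzero.symm).trans (ENNReal.le_tsum 0))).ne'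

lemma ofReal_mul_min_le_dilationKernel_mul (hφpos : ∀ t, 0 < t → 0 < φ t) (i k : ℤ) :
    ENNReal.ofReal (φ (2 ^ (-i))) * min 1 (ENNReal.ofReal (2 ^ (-k))) ≤
      dilationKernel φ k * ENNReal.ofReal (φ (2 ^ (-(i + k)))) := by
  have hpos : (0 : ℝ) < 2 ^ (-(i + k)) := by positivity
  calc ENNReal.ofReal (φ (2 ^ (-i))) * min 1 (ENNReal.ofReal (2 ^ (-k)))
      = ENNReal.ofReal (φ (2 ^ k * 2 ^ (-(i + k)))) * min 1 (ENNReal.ofReal (2 ^ (-k))) := by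
        rw [← zpow_add₀ two_ne_zero, neg_add_rev, add_neg_cancel_left]
    _ ≤ sPhi φ (2 ^ k) * ENNReal.ofReal (φ (2 ^ (-(i + k)))) *
          min 1 (ENNReal.ofReal (2 ^ (-k))) := by
        gcongr
        exact ofReal_le_sPhi_mul hpos (hφpos _ hpos)
    _ = dilationKernel φ k * ENNReal.ofReal (φ (2 ^ (-(i + k)))) := mul_right_comm _ _ _

end DilationFunction

section KFunctional

variable {E A₀ A₁ : Type*} [AddCommGroup E] [NormedAddCommGroup A₀] [NormedAddCommGroup A₁]
  {j₀ : A₀ →+ E} {j₁ : A₁ →+ E} {s t : ℝ}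

lemma Kfun_add_le_ofReal (t : ℝ) (x : A₀) (y : A₁) :
    Kfun j₀ j₁ t (j₀ x + j₁ y) ≤ ENNReal.ofReal (‖x‖ + t * ‖y‖) :=
  iInf₂_le (f := fun (q : A₀ × A₁) (_ : j₀ q.1 + j₁ q.2 = j₀ x + j₁ y) =>
    ENNReal.ofReal (‖q.1‖ + t * ‖q.2‖)) (x, y) rfl

lemma Kfun_left_le (t : ℝ) (x : A₀) : Kfun j₀ j₁ t (j₀ x) ≤ ENNReal.ofReal ‖x‖ := by
  simpa using Kfun_add_le_ofReal (j₀ := j₀) (j₁ := j₁) t x 0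

lemma Kfun_right_le (t : ℝ) (y : A₁) : Kfun j₀ j₁ t (j₁ y) ≤ ENNReal.ofReal (t * ‖y‖) := by
  simpa using Kfun_add_le_ofReal (j₀ := j₀) (j₁ := j₁) t 0 y

lemma Kfun_zero (t : ℝ) : Kfun j₀ j₁ t 0 = 0 := by
  simpa using Kfun_left_le (j₀ := j₀) (j₁ := j₁) t 0

lemma Kfun_add_le (ht : 0 ≤ t) (a b : E) :
    Kfun j₀ j₁ t (a + b) ≤ Kfun j₀ j₁ t a + Kfun j₀ j₁ t b := by
  refine le_iInf₂_add_iInf₂ ?_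
  rintro q rfl r rfl
  rw [add_add_add_comm, ← map_add, ← map_add, ← ENNReal.ofReal_add (by positivity) (by positivity),
    add_add_add_comm, ← mul_add]
  refine (Kfun_add_le_ofReal t _ _).trans (ENNReal.ofReal_le_ofReal ?_)
  gcongr
  exacts [norm_add_le _ _, norm_add_le _ _]

lemma Kfun_sum_le (ht : 0 ≤ t) {ι : Type*} (I : Finset ι) (f : ι → E) :
    Kfun j₀ j₁ t (∑ i ∈ I, f i) ≤ ∑ i ∈ I, Kfun j₀ j₁ t (f i) :=
  Finset.le_sum_of_subadditive _ (Kfun_zero t).le (Kfun_add_le ht) I f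

lemma Kfun_le_ofReal_mul {c : ℝ} (hc : 1 ≤ c) (hts : t ≤ c * s) (a : E) :
    Kfun j₀ j₁ t a ≤ ENNReal.ofReal c * Kfun j₀ j₁ s a := by
  have hc0 : 0 < c := one_pos.trans_le hc
  have hc0' : ENNReal.ofReal c ≠ 0 := (ENNReal.ofReal_pos.2 hc0).ne'
  rw [Kfun.eq_def _ _ s]
  simp only [ENNReal.mul_iInf_of_ne hc0' ENNReal.ofReal_ne_top, le_iInf_iff]
  rintro q rfl
  rw [← ENNReal.ofReal_mul hc0.le, mul_add, ← mul_assoc]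
  refine (Kfun_add_le_ofReal t _ _).trans (ENNReal.ofReal_le_ofReal ?_)
  gcongr
  exact le_mul_of_one_le_left (norm_nonneg _) hc

lemma Kfun_mono (hts : t ≤ s) (a : E) : Kfun j₀ j₁ t a ≤ Kfun j₀ j₁ s a := by
  simpa using Kfun_le_ofReal_mul le_rfl (hts.trans_eq (one_mul s).symm) a

lemma Kfun_le_min_mul_Jfun (ht : 0 ≤ t) (hs : 0 < s) {u : A₀ × A₁} (hu : j₀ u.1 = j₁ u.2) :
    Kfun j₀ j₁ t (j₀ u.1) ≤ min 1 (ENNReal.ofReal (t / s)) * ENNReal.ofReal (Jfun s u) := by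
  rw [min_mul, one_mul, ← ENNReal.ofReal_mul (by positivity)]
  refine le_min ((Kfun_left_le t _).trans (ENNReal.ofReal_le_ofReal (le_max_left _ _))) ?_
  rw [hu]
  refine (Kfun_right_le t _).trans (ENNReal.ofReal_le_ofReal ?_)
  calc t * ‖u.2‖ = t / s * (s * ‖u.2‖) := by field_simp
    _ ≤ t / s * Jfun s u := by
        gcongr
        exact le_max_right _ _

end KFunctional

section DyadicDiscretization

lemma iUnion_Ico_two_zpow : ⋃ i : ℤ, Ico ((2 : ℝ) ^ i) (2 ^ (i + 1)) = Ioi 0 := by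
  ext t
  rw [mem_iUnion]
  exact ⟨fun ⟨i, hi⟩ => (zpow_pos two_pos i).trans_le hi.1,
    fun ht => exists_mem_Ico_zpow ht one_lt_two⟩

lemma volume_Ico_two_zpow (i : ℤ) :
    volume (Ico ((2 : ℝ) ^ i) (2 ^ (i + 1))) = ENNReal.ofReal (2 ^ i) := by
  rw [Real.volume_Ico, zpow_add_one₀ two_ne_zero, mul_two, add_sub_cancel_right]

lemma lintegral_Ioi_eq_tsum_Ico_two_zpow (F : ℝ → ℝ≥0∞) :
    ∫⁻ t in Ioi 0, F t = ∑' i : ℤ, ∫⁻ t in Ico ((2 : ℝ) ^ i) (2 ^ (i + 1)), F t := by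
  rw [← iUnion_Ico_two_zpow]
  exact lintegral_iUnion (fun i => measurableSet_Ico)
    (zpow_right_mono₀ (one_le_two (α := ℝ))).pairwise_disjoint_on_Ico_succ F

lemma lintegral_Ioi_div_le_tsum {F : ℝ → ℝ≥0∞} {x : ℤ → ℝ≥0∞}
    (h : ∀ i : ℤ, ∀ t ∈ Ico ((2 : ℝ) ^ i) (2 ^ (i + 1)), F t ≤ x i) :
    ∫⁻ t in Ioi 0, F t / ENNReal.ofReal t ≤ ∑' i, x i := by
  rw [lintegral_Ioi_eq_tsum_Ico_two_zpow]
  refine ENNReal.tsum_le_tsum fun i => ?_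
  calc ∫⁻ t in Ico ((2 : ℝ) ^ i) (2 ^ (i + 1)), F t / ENNReal.ofReal t
      ≤ ∫⁻ _ in Ico ((2 : ℝ) ^ i) (2 ^ (i + 1)), x i / ENNReal.ofReal (2 ^ i) :=
        setLIntegral_mono measurable_const fun t ht =>
          ENNReal.div_le_div (h i t ht) (ENNReal.ofReal_le_ofReal ht.1)
    _ = x i := by
        rw [setLIntegral_const, volume_Ico_two_zpow]
        exact ENNReal.div_mul_cancel (by positivity) ENNReal.ofReal_ne_top

lemma tsum_le_two_mul_lintegral_Ioi_div {F : ℝ → ℝ≥0∞} {x : ℤ → ℝ≥0∞}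
    (h : ∀ i : ℤ, ∀ t ∈ Ico ((2 : ℝ) ^ i) (2 ^ (i + 1)), x i ≤ F t) :
    ∑' i, x i ≤ 2 * ∫⁻ t in Ioi 0, F t / ENNReal.ofReal t := by
  rw [lintegral_Ioi_eq_tsum_Ico_two_zpow, ← ENNReal.tsum_mul_left]
  refine ENNReal.tsum_le_tsum fun i => ?_
  have hvol : ENNReal.ofReal (2 ^ (i + 1)) = 2 * ENNReal.ofReal (2 ^ i) := by
    rw [zpow_add_one₀ two_ne_zero, mul_comm, ENNReal.ofReal_mul two_pos.le, ENNReal.ofReal_ofNat]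
  calc x i = x i / ENNReal.ofReal (2 ^ (i + 1)) * ENNReal.ofReal (2 ^ (i + 1)) :=
        (ENNReal.div_mul_cancel (by positivity) ENNReal.ofReal_ne_top).symm
    _ = 2 * ∫⁻ _ in Ico ((2 : ℝ) ^ i) (2 ^ (i + 1)), x i / ENNReal.ofReal (2 ^ (i + 1)) := by
        rw [setLIntegral_const, volume_Ico_two_zpow, mul_left_comm, ← hvol]
    _ ≤ 2 * ∫⁻ t in Ico ((2 : ℝ) ^ i) (2 ^ (i + 1)), F t / ENNReal.ofReal t := by
        gcongr 2 * ?_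
        exact setLIntegral_mono' measurableSet_Ico fun t ht =>
          ENNReal.div_le_div (h i t ht) (ENNReal.ofReal_le_ofReal ht.2.le)

variable {E A₀ A₁ : Type*} [AddCommGroup E] [NormedAddCommGroup A₀] [NormedAddCommGroup A₁]
  {j₀ : A₀ →+ E} {j₁ : A₁ →+ E} {φ : ℝ → ℝ} {p S : ℝ≥0∞} {t : ℝ} {i : ℤ}

/-- The values `φ(2⁻ⁱ) K(2ⁱ, a)` of the integrand of `interpNormK` along the dyadic scale. -/
noncomputable def weightedK (φ : ℝ → ℝ) (j₀ : A₀ →+ E) (j₁ : A₁ →+ E) (a : E) (i : ℤ) : ℝ≥0∞ :=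
  ENNReal.ofReal (φ (2 ^ (-i))) * Kfun j₀ j₁ (2 ^ i) a

lemma ofReal_mul_Kfun_le_weightedK (hφpos : ∀ t, 0 < t → 0 < φ t)
    (hS : ∀ l, 0 < l → l ≤ 1 → sPhi φ l ≤ S) (a : E) (ht : t ∈ Ico ((2 : ℝ) ^ i) (2 ^ (i + 1))) :
    ENNReal.ofReal (φ t⁻¹) * Kfun j₀ j₁ t a ≤ 2 * S * weightedK φ j₀ j₁ a i := by
  have hi : (0 : ℝ) < 2 ^ i := by positivity
  have hi' : (0 : ℝ) < 2 ^ (-i) := by positivity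
  have ht0 : 0 < t := hi.trans_le ht.1
  have hratio : 2 ^ i / t ≤ 1 := (div_le_one ht0).2 ht.1
  have hφt : ENNReal.ofReal (φ t⁻¹) ≤ S * ENNReal.ofReal (φ (2 ^ (-i))) := by
    calc ENNReal.ofReal (φ t⁻¹) = ENNReal.ofReal (φ (2 ^ i / t * 2 ^ (-i))) := by
          rw [zpow_neg, div_mul_eq_mul_div, mul_inv_cancel₀ hi.ne', one_div]
      _ ≤ sPhi φ (2 ^ i / t) * ENNReal.ofReal (φ (2 ^ (-i))) :=
          ofReal_le_sPhi_mul hi' (hφpos _ hi')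
      _ ≤ S * ENNReal.ofReal (φ (2 ^ (-i))) := by
          gcongr
          exact hS _ (div_pos hi ht0) hratio
  have hK : Kfun j₀ j₁ t a ≤ ENNReal.ofReal 2 * Kfun j₀ j₁ (2 ^ i) a :=
    Kfun_le_ofReal_mul one_le_two
      (ht.2.le.trans_eq (by rw [zpow_add_one₀ two_ne_zero, mul_comm])) a
  calc ENNReal.ofReal (φ t⁻¹) * Kfun j₀ j₁ t a
      ≤ S * ENNReal.ofReal (φ (2 ^ (-i))) * (ENNReal.ofReal 2 * Kfun j₀ j₁ (2 ^ i) a) := by gcongr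
    _ = 2 * S * weightedK φ j₀ j₁ a i := by
        rw [weightedK, ENNReal.ofReal_ofNat]
        ring

lemma weightedK_le_mul_ofReal_mul_Kfun (hφpos : ∀ t, 0 < t → 0 < φ t)
    (hS : ∀ l, 0 < l → l ≤ 2 → sPhi φ l ≤ S) (a : E) (ht : t ∈ Ico ((2 : ℝ) ^ i) (2 ^ (i + 1))) :
    weightedK φ j₀ j₁ a i ≤ S * (ENNReal.ofReal (φ t⁻¹) * Kfun j₀ j₁ t a) := by
  have hi : (0 : ℝ) < 2 ^ i := by positivity
  have ht0 : 0 < t := hi.trans_le ht.1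
  have hratio : t / 2 ^ i ≤ 2 := by
    rw [div_le_iff₀ hi, mul_comm, ← zpow_add_one₀ two_ne_zero]
    exact ht.2.le
  calc weightedK φ j₀ j₁ a i
      = ENNReal.ofReal (φ (t / 2 ^ i * t⁻¹)) * Kfun j₀ j₁ (2 ^ i) a := by
        rw [weightedK, zpow_neg, div_mul_eq_mul_div, mul_inv_cancel₀ ht0.ne', one_div]
    _ ≤ S * ENNReal.ofReal (φ t⁻¹) * Kfun j₀ j₁ t a := by
        gcongr
        · exact (ofReal_le_sPhi_mul (inv_pos.2 ht0) (hφpos _ (inv_pos.2 ht0))).trans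
            (mul_le_mul_left (hS _ (div_pos ht0 hi) hratio) _)
        · exact Kfun_mono ht.1 a
    _ = S * (ENNReal.ofReal (φ t⁻¹) * Kfun j₀ j₁ t a) := mul_assoc _ _ _

lemma interpNormK_le_eLpNorm_weightedK (hp : p ≠ 0) (hφpos : ∀ t, 0 < t → 0 < φ t)
    (hS : ∀ l, 0 < l → l ≤ 1 → sPhi φ l ≤ S) (a : E) :
    interpNormK φ p j₀ j₁ a ≤ 2 * S * eLpNorm (weightedK φ j₀ j₁ a) p .count := by
  calc interpNormK φ p j₀ j₁ a
      ≤ eLpNorm (fun i => 2 * S * weightedK φ j₀ j₁ a i) p .count := by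
        rw [interpNormK, eLpNorm_count_eq hp]
        split_ifs with hpt
        · refine iSup₂_le fun t ht => ?_
          obtain ⟨i, hi⟩ := exists_mem_Ico_zpow (mem_Ioi.1 ht) (one_lt_two (α := ℝ))
          exact le_iSup_of_le i (ofReal_mul_Kfun_le_weightedK hφpos hS a hi)
        · gcongr
          exact lintegral_Ioi_div_le_tsum fun i t ht => ENNReal.rpow_le_rpow
            (ofReal_mul_Kfun_le_weightedK hφpos hS a ht) ENNReal.toReal_nonneg
    _ ≤ 2 * S * eLpNorm (weightedK φ j₀ j₁ a) p .count :=
        eLpNorm_le_mul_eLpNorm_of_ae_le_mul'' p Measurable.of_discrete.aestronglyMeasurable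
          (.of_forall fun _ => le_rfl)

lemma eLpNorm_weightedK_le_interpNormK (hp : 1 ≤ p) (hφpos : ∀ t, 0 < t → 0 < φ t)
    (hS' : S ≠ ∞) (hS : ∀ l, 0 < l → l ≤ 2 → sPhi φ l ≤ S) (a : E) :
    eLpNorm (weightedK φ j₀ j₁ a) p .count ≤ 2 * S * interpNormK φ p j₀ j₁ a := by
  rw [interpNormK, eLpNorm_count_eq (one_pos.trans_le hp).ne', mul_assoc]
  split_ifs with hpt
  · refine iSup_le fun i => le_trans ?_ (le_mul_of_one_le_left' one_le_two)
    have hi : (2 : ℝ) ^ i ∈ Ico ((2 : ℝ) ^ i) (2 ^ (i + 1)) :=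
      left_mem_Ico.2 (zpow_lt_zpow_right₀ one_lt_two (lt_add_one i))
    refine (weightedK_le_mul_ofReal_mul_Kfun hφpos hS a hi).trans (mul_le_mul_right ?_ _)
    exact le_iSup₂ (f := fun t (_ : t ∈ Ioi (0 : ℝ)) => ENNReal.ofReal (φ t⁻¹) * Kfun j₀ j₁ t a)
      (2 ^ i) (mem_Ioi.2 (zpow_pos two_pos i))
  · have hr : 1 ≤ p.toReal := by simpa using ENNReal.toReal_mono hpt hp
    set r := p.toReal
    have hr0 : 0 < r := one_pos.trans_le hr
    set N := ∫⁻ t in Ioi 0, (ENNReal.ofReal (φ t⁻¹) * Kfun j₀ j₁ t a) ^ r / ENNReal.ofReal t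
    have hsum : ∑' i, weightedK φ j₀ j₁ a i ^ r ≤ 2 * (S ^ r * N) := by
      refine (tsum_le_two_mul_lintegral_Ioi_div fun i t ht => ENNReal.rpow_le_rpow
        (weightedK_le_mul_ofReal_mul_Kfun hφpos hS a ht) hr0.le).trans_eq ?_
      simp only [ENNReal.mul_rpow_of_nonneg _ _ hr0.le, mul_div_assoc]
      rw [lintegral_const_mul' _ _ (ENNReal.rpow_ne_top_of_nonneg hr0.le hS')]
      simp only [N, ENNReal.mul_rpow_of_nonneg _ _ hr0.le, mul_div_assoc]
    calc (∑' i, weightedK φ j₀ j₁ a i ^ r) ^ r⁻¹ ≤ (2 * (S ^ r * N)) ^ r⁻¹ := by gcongr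
      _ = 2 ^ r⁻¹ * (S * N ^ r⁻¹) := by
          simp only [ENNReal.mul_rpow_of_nonneg _ _ (inv_nonneg.2 hr0.le),
            ENNReal.rpow_rpow_inv hr0.ne']
      _ ≤ 2 * (S * N ^ r⁻¹) := by
          gcongr
          simpa using ENNReal.rpow_le_rpow_of_exponent_le one_le_two (inv_le_one_of_one_le₀ hr)

end DyadicDiscretization

section JRepresentation

variable {E A₀ A₁ : Type*} [AddCommGroup E] [NormedAddCommGroup A₀] [NormedAddCommGroup A₁]
  {j₀ : A₀ →+ E} {j₁ : A₁ →+ E} {φ : ℝ → ℝ} {p : ℝ≥0∞} {a : E} {u : ℤ → A₀ × A₁}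

/-- The representations `a = ∑_{j ∈ ℤ} u_j` over which `interpNormJ` takes the infimum: each `u_j`
is an element of `A₀ ∩ A₁`, given as a pair with a common image, and the symmetric partial sums
converge to `a` in `A₀ + A₁`. -/
structure IsJRepresentation (j₀ : A₀ →+ E) (j₁ : A₁ →+ E) (a : E) (u : ℤ → A₀ × A₁) : Prop where
  map_eq_map : ∀ j, j₀ (u j).1 = j₁ (u j).2
  tendsto_Kfun : Tendsto
    (fun N : ℕ => Kfun j₀ j₁ 1 (a - ∑ j ∈ Finset.Icc (-(N : ℤ)) N, j₀ (u j).1)) atTop (nhds 0)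

/-- The values `φ(2⁻ʲ) J(2ʲ, u_j)` whose `ℓ_p`-norm is minimized in `interpNormJ`. -/
noncomputable def weightedJ (φ : ℝ → ℝ) (u : ℤ → A₀ × A₁) (j : ℤ) : ℝ≥0∞ :=
  ENNReal.ofReal (φ (2 ^ (-j)) * Jfun (2 ^ j) (u j))

lemma interpNormJ_eq_iInf (hp : p ≠ 0) : interpNormJ φ p j₀ j₁ a =
    ⨅ (u : ℤ → A₀ × A₁) (_ : IsJRepresentation j₀ j₁ a u), eLpNorm (weightedJ φ u) p .count := by
  simp only [interpNormJ, eLpNorm_count_eq hp, weightedJ]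
  refine iInf_congr fun u => le_antisymm (le_iInf fun h => ?_) (le_iInf₂ fun h₁ h₂ => ?_)
  · exact iInf₂_le h.map_eq_map h.tendsto_Kfun
  · exact iInf_le _ (IsJRepresentation.mk h₁ h₂)

lemma IsJRepresentation.Kfun_le_tsum (hu : IsJRepresentation j₀ j₁ a u) {t : ℝ} (ht : 0 ≤ t) :
    Kfun j₀ j₁ t a ≤ ∑' j, Kfun j₀ j₁ t (j₀ (u j).1) := by
  set T := ∑' j, Kfun j₀ j₁ t (j₀ (u j).1)
  set c := ENNReal.ofReal (max 1 t)
  set s : ℕ → E := fun N => ∑ j ∈ Finset.Icc (-(N : ℤ)) N, j₀ (u j).1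
  have hlim : Tendsto (fun N => c * Kfun j₀ j₁ 1 (a - s N) + T) atTop (nhds T) := by
    simpa only [mul_zero, zero_add] using
      (ENNReal.Tendsto.const_mul hu.tendsto_Kfun (.inr ENNReal.ofReal_ne_top)).add_const T
  refine ge_of_tendsto' hlim fun N => ?_
  calc Kfun j₀ j₁ t a = Kfun j₀ j₁ t (a - s N + s N) := by rw [sub_add_cancel]
    _ ≤ Kfun j₀ j₁ t (a - s N) + Kfun j₀ j₁ t (s N) := Kfun_add_le ht _ _
    _ ≤ c * Kfun j₀ j₁ 1 (a - s N) + T := by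
        gcongr
        · exact Kfun_le_ofReal_mul (le_max_left _ _)
            ((le_max_right _ _).trans_eq (mul_one _).symm) _
        · exact (Kfun_sum_le ht _ _).trans (ENNReal.sum_le_tsum _)

lemma IsJRepresentation.weightedK_le_tsum (hu : IsJRepresentation j₀ j₁ a u)
    (hφpos : ∀ t, 0 < t → 0 < φ t) (i : ℤ) :
    weightedK φ j₀ j₁ a i ≤ ∑' k, dilationKernel φ k * weightedJ φ u (i + k) := by
  calc weightedK φ j₀ j₁ a i
      ≤ ENNReal.ofReal (φ (2 ^ (-i))) * ∑' j, Kfun j₀ j₁ (2 ^ i) (j₀ (u j).1) := by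
        rw [weightedK]
        gcongr
        exact hu.Kfun_le_tsum (by positivity)
    _ = ∑' k, ENNReal.ofReal (φ (2 ^ (-i))) * Kfun j₀ j₁ (2 ^ i) (j₀ (u (i + k)).1) := by
        rw [← ENNReal.tsum_mul_left, ← (Equiv.addLeft i).tsum_eq]
        rfl
    _ ≤ ∑' k, dilationKernel φ k * weightedJ φ u (i + k) := ENNReal.tsum_le_tsum fun k => ?_
  have hratio : (2 : ℝ) ^ i / 2 ^ (i + k) = 2 ^ (-k) := by
    rw [← zpow_sub₀ two_ne_zero, sub_add_cancel_left]
  calc ENNReal.ofReal (φ (2 ^ (-i))) * Kfun j₀ j₁ (2 ^ i) (j₀ (u (i + k)).1)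
      ≤ ENNReal.ofReal (φ (2 ^ (-i))) * (min 1 (ENNReal.ofReal (2 ^ (-k))) *
          ENNReal.ofReal (Jfun (2 ^ (i + k)) (u (i + k)))) := by
        gcongr
        rw [← hratio]
        exact Kfun_le_min_mul_Jfun (by positivity) (by positivity) (hu.map_eq_map _)
    _ ≤ dilationKernel φ k * ENNReal.ofReal (φ (2 ^ (-(i + k)))) *
          ENNReal.ofReal (Jfun (2 ^ (i + k)) (u (i + k))) := by
        rw [← mul_assoc]
        exact mul_le_mul_left (ofReal_mul_min_le_dilationKernel_mul hφpos i k) _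
    _ = dilationKernel φ k * weightedJ φ u (i + k) := by
        rw [weightedJ, mul_assoc, ENNReal.ofReal_mul (hφpos _ (zpow_pos two_pos _)).le]

lemma eLpNorm_weightedK_le_interpNormJ (hp : 1 ≤ p) (hφpos : ∀ t, 0 < t → 0 < φ t)
    (hφ : memIo φ 0 1) (a : E) :
    eLpNorm (weightedK φ j₀ j₁ a) p .count ≤
      (∑' k, dilationKernel φ k) * interpNormJ φ p j₀ j₁ a := by
  have hsum_ne_zero := tsum_dilationKernel_ne_zero (hφpos 1 one_pos) one_pos
  have hsum_ne_top := tsum_dilationKernel_ne_top hφpos hφ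
  simp only [interpNormJ_eq_iInf (one_pos.trans_le hp).ne',
    ENNReal.mul_iInf_of_ne hsum_ne_zero hsum_ne_top, le_iInf_iff]
  exact fun u hu => (eLpNorm_mono_enorm fun i => hu.weightedK_le_tsum hφpos i).trans
    (eLpNorm_count_tsum_mul_le _ _ hp)

end JRepresentation

section NearOptimalDecompositions

variable {E A₀ A₁ : Type*} [AddCommGroup E] [NormedAddCommGroup A₀] [NormedAddCommGroup A₁]
  {j₀ : A₀ →+ E} {j₁ : A₁ →+ E} {φ : ℝ → ℝ} {p S : ℝ≥0∞} {a : E} {q : ℤ → A₀ × A₁}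

/-- The weighted cost `φ(2⁻ⁱ) (‖a₀‖ + 2ⁱ ‖a₁‖)` of the `i`-th of a family of decompositions
`a = a₀ + a₁`; its infimum over decompositions is `weightedK φ j₀ j₁ a i`. -/
noncomputable def weightedCost (φ : ℝ → ℝ) (q : ℤ → A₀ × A₁) (i : ℤ) : ℝ≥0∞ :=
  ENNReal.ofReal (φ (2 ^ (-i))) * ENNReal.ofReal (‖(q i).1‖ + 2 ^ i * ‖(q i).2‖)

/-- The increments `a₀(i+1) - a₀(i) = a₁(i) - a₁(i+1)` of a family of decompositions
`a = a₀(i) + a₁(i)`, as pairs representing elements of `A₀ ∩ A₁`. -/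
def decompositionIncrement (q : ℤ → A₀ × A₁) (i : ℤ) : A₀ × A₁ :=
  ((q (i + 1)).1 - (q i).1, (q i).2 - (q (i + 1)).2)

lemma exists_weightedCost_le (hφpos : ∀ t, 0 < t → 0 < φ t) {e : ℤ → ℝ≥0∞}
    (he : ∀ i, 0 < e i) (hK : ∀ i, weightedK φ j₀ j₁ a i ≠ ∞) :
    ∃ q : ℤ → A₀ × A₁, (∀ i, j₀ (q i).1 + j₁ (q i).2 = a) ∧
      ∀ i, weightedCost φ q i ≤ weightedK φ j₀ j₁ a i + e i := by
  have hφ0 (i : ℤ) : ENNReal.ofReal (φ (2 ^ (-i))) ≠ 0 :=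
    (ENNReal.ofReal_pos.2 (hφpos _ (zpow_pos two_pos _))).ne'
  have hex (i : ℤ) : ∃ x : A₀ × A₁, j₀ x.1 + j₁ x.2 = a ∧
      ENNReal.ofReal (φ (2 ^ (-i))) * ENNReal.ofReal (‖x.1‖ + 2 ^ i * ‖x.2‖) ≤
        weightedK φ j₀ j₁ a i + e i := by
    have hlt := ENNReal.lt_add_right (hK i) (he i).ne'
    conv_lhs at hlt => rw [weightedK, Kfun]
    simp only [ENNReal.mul_iInf_of_ne (hφ0 i) ENNReal.ofReal_ne_top, iInf_lt_iff] at hlt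
    obtain ⟨x, hx, hlt⟩ := hlt
    exact ⟨x, hx, hlt.le⟩
  choose q hq hle using hex
  exact ⟨q, hq, hle⟩

lemma sum_Icc_succ_sub (b : ℤ → E) (N : ℕ) :
    ∑ j ∈ Finset.Icc (-(N : ℤ)) N, (b (j + 1) - b j) = b (N + 1) - b (-N) := by
  have hIco := Finset.sum_Ico_int_sub N fun j => -b j
  simp only [neg_sub_neg] at hIco
  rw [Finset.sum_Icc_eq_sum_Ico_add _ (neg_nonpos.2 N.cast_nonneg |>.trans N.cast_nonneg), hIco]
  exact sub_add_sub_cancel' _ _ _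

lemma isJRepresentation_decompositionIncrement (hq : ∀ i, j₀ (q i).1 + j₁ (q i).2 = a)
    (h₀ : Tendsto (fun N : ℕ => ENNReal.ofReal ‖(q (-N)).1‖) atTop (nhds 0))
    (h₁ : Tendsto (fun N : ℕ => ENNReal.ofReal ‖(q (N + 1)).2‖) atTop (nhds 0)) :
    IsJRepresentation j₀ j₁ a (decompositionIncrement q) where
  map_eq_map i := by
    simp only [decompositionIncrement, map_sub]
    rw [sub_eq_sub_iff_add_eq_add, hq, add_comm, hq]
  tendsto_Kfun := by
    have hrem (N : ℕ) : a - ∑ j ∈ Finset.Icc (-(N : ℤ)) N, j₀ (decompositionIncrement q j).1 =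
        j₀ (q (-N)).1 + j₁ (q (N + 1)).2 := by
      simp only [decompositionIncrement, map_sub]
      rw [sum_Icc_succ_sub (fun i => j₀ (q i).1) N, ← hq (N + 1)]
      abel
    refine tendsto_of_tendsto_of_tendsto_of_le_of_le tendsto_const_nhds
      (by simpa only [add_zero] using h₀.add h₁) (fun _ => zero_le) fun N => ?_
    simp only [hrem]
    refine (Kfun_add_le_ofReal 1 _ _).trans_eq ?_
    rw [one_mul, ENNReal.ofReal_add (norm_nonneg _) (norm_nonneg _)]

lemma tendsto_min_mul_cost_cofinite (hφpos : ∀ t, 0 < t → 0 < φ t) (hφ : memIo φ 0 1)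
    {Y : ℝ≥0∞} (hY : Y ≠ ∞) (hle : ∀ k, weightedCost φ q k ≤ Y) :
    Tendsto (fun k => min 1 (ENNReal.ofReal (2 ^ (-k))) *
      ENNReal.ofReal (‖(q k).1‖ + 2 ^ k * ‖(q k).2‖)) cofinite (nhds 0) := by
  have hφ1 : ENNReal.ofReal (φ 1) ≠ 0 := (ENNReal.ofReal_pos.2 (hφpos 1 one_pos)).ne'
  have hlim : Tendsto (fun k => (ENNReal.ofReal (φ 1))⁻¹ * (dilationKernel φ k * Y))
      cofinite (nhds 0) := by
    simpa only [zero_mul, mul_zero] using ENNReal.Tendsto.const_mul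
      (ENNReal.Tendsto.mul_const (ENNReal.tendsto_cofinite_zero_of_tsum_ne_top
        (tsum_dilationKernel_ne_top hφpos hφ)) (.inr hY)) (.inr (ENNReal.inv_ne_top.2 hφ1))
  refine tendsto_of_tendsto_of_tendsto_of_le_of_le tendsto_const_nhds hlim (fun _ => zero_le)
    fun k => (ENNReal.mul_le_iff_le_inv hφ1 ENNReal.ofReal_ne_top).1 ?_
  have hkernel := ofReal_mul_min_le_dilationKernel_mul hφpos 0 k
  rw [neg_zero, zpow_zero, zero_add] at hkernel
  rw [← mul_assoc]
  refine (mul_le_mul_left hkernel _).trans ?_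
  rw [mul_assoc]
  exact mul_le_mul_right (hle k) _

lemma IsJRepresentation.of_weightedCost_le (hφpos : ∀ t, 0 < t → 0 < φ t) (hφ : memIo φ 0 1)
    (hq : ∀ i, j₀ (q i).1 + j₁ (q i).2 = a) {Y : ℝ≥0∞} (hY : Y ≠ ∞)
    (hle : ∀ k, weightedCost φ q k ≤ Y) :
    IsJRepresentation j₀ j₁ a (decompositionIncrement q) := by
  have hlim := tendsto_min_mul_cost_cofinite hφpos hφ hY hle
  have hneg : Tendsto (fun N : ℕ => -(N : ℤ)) atTop cofinite :=
    Nat.cofinite_eq_atTop ▸ (neg_injective.comp Nat.cast_injective).tendsto_cofinite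
  have hsucc : Tendsto (fun N : ℕ => (N : ℤ) + 1) atTop cofinite :=
    Nat.cofinite_eq_atTop ▸ ((add_left_injective 1).comp Nat.cast_injective).tendsto_cofinite
  refine isJRepresentation_decompositionIncrement hq
    (tendsto_of_tendsto_of_tendsto_of_le_of_le tendsto_const_nhds (hlim.comp hneg)
      (fun _ => zero_le) fun N => ?_)
    (tendsto_of_tendsto_of_tendsto_of_le_of_le tendsto_const_nhds (hlim.comp hsucc)
      (fun _ => zero_le) fun N => ?_)
  · have hmin : min 1 (ENNReal.ofReal (2 ^ (- -(N : ℤ)))) = 1 :=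
      min_eq_left (ENNReal.one_le_ofReal.2 (one_le_zpow₀ one_le_two (by simp)))
    simp only [Function.comp_apply, hmin, one_mul]
    exact ENNReal.ofReal_le_ofReal (le_add_of_nonneg_right (by positivity))
  · have hmin : min 1 (ENNReal.ofReal (2 ^ (-((N : ℤ) + 1)))) =
        ENNReal.ofReal (2 ^ (-((N : ℤ) + 1))) :=
      min_eq_right (ENNReal.ofReal_le_one.2 (zpow_le_one_of_nonpos₀ one_le_two (by lia)))
    simp only [Function.comp_apply, hmin]
    rw [← ENNReal.ofReal_mul (by positivity), zpow_neg, mul_add,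
      inv_mul_cancel_left₀ (by positivity)]
    exact ENNReal.ofReal_le_ofReal (le_add_of_nonneg_left (by positivity))

lemma Jfun_decompositionIncrement_le (q : ℤ → A₀ × A₁) (j : ℤ) :
    Jfun (2 ^ j) (decompositionIncrement q j) ≤
      (‖(q (j + 1)).1‖ + 2 ^ (j + 1) * ‖(q (j + 1)).2‖) + (‖(q j).1‖ + 2 ^ j * ‖(q j).2‖) := by
  refine max_le ?_ ?_
  · calc ‖(q (j + 1)).1 - (q j).1‖ ≤ ‖(q (j + 1)).1‖ + ‖(q j).1‖ := norm_sub_le _ _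
      _ ≤ _ := add_le_add (le_add_of_nonneg_right (by positivity))
          (le_add_of_nonneg_right (by positivity))
  · calc 2 ^ j * ‖(q j).2 - (q (j + 1)).2‖ ≤ 2 ^ j * (‖(q j).2‖ + ‖(q (j + 1)).2‖) := by
          gcongr
          exact norm_sub_le _ _
      _ = 2 ^ j * ‖(q (j + 1)).2‖ + 2 ^ j * ‖(q j).2‖ := by rw [mul_add, add_comm]
      _ ≤ 2 ^ (j + 1) * ‖(q (j + 1)).2‖ + 2 ^ j * ‖(q j).2‖ := by
          gcongr
          exacts [one_le_two, (lt_add_one j).le]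
      _ ≤ _ := add_le_add (le_add_of_nonneg_left (norm_nonneg _))
          (le_add_of_nonneg_left (norm_nonneg _))

lemma weightedJ_decompositionIncrement_le (hφpos : ∀ t, 0 < t → 0 < φ t) (hS : sPhi φ 2 ≤ S)
    (q : ℤ → A₀ × A₁) (j : ℤ) :
    weightedJ φ (decompositionIncrement q) j ≤
      S * weightedCost φ q (j + 1) + weightedCost φ q j := by
  have hφj : ENNReal.ofReal (φ (2 ^ (-j))) ≤ S * ENNReal.ofReal (φ (2 ^ (-(j + 1)))) := by
    have hpos : (0 : ℝ) < 2 ^ (-(j + 1)) := by positivity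
    rw [show (2 : ℝ) ^ (-j) = 2 * 2 ^ (-(j + 1)) by
      rw [← zpow_one_add₀ two_ne_zero, neg_add_rev, add_neg_cancel_left]]
    exact (ofReal_le_sPhi_mul hpos (hφpos _ hpos)).trans (mul_le_mul_left hS _)
  set x : ℤ → ℝ := fun i => ‖(q i).1‖ + 2 ^ i * ‖(q i).2‖
  calc weightedJ φ (decompositionIncrement q) j
      = ENNReal.ofReal (φ (2 ^ (-j))) *
          ENNReal.ofReal (Jfun (2 ^ j) (decompositionIncrement q j)) :=
        ENNReal.ofReal_mul (hφpos _ (by positivity)).le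
    _ ≤ ENNReal.ofReal (φ (2 ^ (-j))) * (ENNReal.ofReal (x (j + 1)) + ENNReal.ofReal (x j)) := by
        gcongr
        exact (ENNReal.ofReal_le_ofReal (Jfun_decompositionIncrement_le q j)).trans
          ENNReal.ofReal_add_le
    _ ≤ S * ENNReal.ofReal (φ (2 ^ (-(j + 1)))) * ENNReal.ofReal (x (j + 1)) +
          ENNReal.ofReal (φ (2 ^ (-j))) * ENNReal.ofReal (x j) := by
        rw [mul_add]
        gcongr
    _ = S * weightedCost φ q (j + 1) + weightedCost φ q j := by
        rw [mul_assoc, weightedCost, weightedCost]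

lemma eLpNorm_weightedJ_decompositionIncrement_le (hp : 1 ≤ p) (hφpos : ∀ t, 0 < t → 0 < φ t)
    (hS : sPhi φ 2 ≤ S) (q : ℤ → A₀ × A₁) :
    eLpNorm (weightedJ φ (decompositionIncrement q)) p .count ≤
      (S + 1) * eLpNorm (weightedCost φ q) p .count := by
  have hmeas (x : ℤ → ℝ≥0∞) : AEStronglyMeasurable x .count :=
    Measurable.of_discrete.aestronglyMeasurable
  calc eLpNorm (weightedJ φ (decompositionIncrement q)) p .count
      ≤ eLpNorm ((fun j => S * weightedCost φ q (j + 1)) + weightedCost φ q) p .count :=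
        eLpNorm_mono_enorm fun j => weightedJ_decompositionIncrement_le hφpos hS q j
    _ ≤ eLpNorm (fun j => S * weightedCost φ q (j + 1)) p .count +
          eLpNorm (weightedCost φ q) p .count := eLpNorm_add_le (hmeas _) (hmeas _) hp
    _ ≤ S * eLpNorm (weightedCost φ q ∘ (· + 1)) p .count +
          eLpNorm (weightedCost φ q) p .count := by
        gcongr
        exact eLpNorm_le_mul_eLpNorm_of_ae_le_mul'' p (hmeas _) (.of_forall fun _ => le_rfl)
    _ = (S + 1) * eLpNorm (weightedCost φ q) p .count := by
        rw [eLpNorm_comp_measurePreserving (hmeas _) (measurePreserving_add_right .count 1),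
          add_one_mul]

lemma interpNormJ_le_eLpNorm_weightedK (hp : 1 ≤ p) (hφpos : ∀ t, 0 < t → 0 < φ t)
    (hφ : memIo φ 0 1) (hS' : S ≠ ∞) (hS : sPhi φ 2 ≤ S) (a : E) :
    interpNormJ φ p j₀ j₁ a ≤ (S + 1) * eLpNorm (weightedK φ j₀ j₁ a) p .count := by
  have hp0 : p ≠ 0 := (one_pos.trans_le hp).ne'
  have hS1 : S + 1 ≠ ∞ := ENNReal.add_ne_top.2 ⟨hS', ENNReal.one_ne_top⟩
  have hS0 : S + 1 ≠ 0 := by simp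
  rcases eq_or_ne (eLpNorm (weightedK φ j₀ j₁ a) p .count) ∞ with hK | hK
  · simp only [hK, ENNReal.mul_top hS0, le_top]
  refine ENNReal.le_of_forall_pos_le_add fun ε hε _ => ?_
  obtain ⟨e, he, hnorm⟩ := exists_pos_eLpNorm_count_le (ι := ℤ) p
    (ENNReal.div_ne_zero.2 ⟨ENNReal.coe_ne_zero.2 hε.ne', hS1⟩)
  obtain ⟨q, hq, hcost⟩ := exists_weightedCost_le hφpos he fun i =>
    ne_top_of_le_ne_top hK (enorm_le_eLpNorm_count (weightedK φ j₀ j₁ a) i hp0)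
  have hcost_norm : eLpNorm (weightedCost φ q) p .count ≤
      eLpNorm (weightedK φ j₀ j₁ a) p .count + ε / (S + 1) :=
    (eLpNorm_mono_enorm hcost).trans ((eLpNorm_add_le Measurable.of_discrete.aestronglyMeasurable
      Measurable.of_discrete.aestronglyMeasurable hp).trans (add_le_add_right hnorm _))
  have hcost_ne_top : eLpNorm (weightedCost φ q) p .count ≠ ∞ :=
    ne_top_of_le_ne_top (ENNReal.add_ne_top.2 ⟨hK, ENNReal.div_ne_top ENNReal.coe_ne_top hS0⟩)
      hcost_norm
  have hrep := IsJRepresentation.of_weightedCost_le hφpos hφ hq hcost_ne_top fun i =>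
    enorm_le_eLpNorm_count (weightedCost φ q) i hp0
  calc interpNormJ φ p j₀ j₁ a
      ≤ eLpNorm (weightedJ φ (decompositionIncrement q)) p .count :=
        (interpNormJ_eq_iInf hp0).trans_le (iInf₂_le _ hrep)
    _ ≤ (S + 1) * eLpNorm (weightedCost φ q) p .count :=
        eLpNorm_weightedJ_decompositionIncrement_le hp hφpos hS q
    _ ≤ (S + 1) * (eLpNorm (weightedK φ j₀ j₁ a) p .count + ε / (S + 1)) := by gcongr
    _ = (S + 1) * eLpNorm (weightedK φ j₀ j₁ a) p .count + ε := by
        rw [mul_add, ENNReal.mul_div_cancel hS0 hS1]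

end NearOptimalDecompositions

/-- Equivalence theorem: for an interpolation couple `(A₀,A₁)`,
`φ ∈ I_o(0,1)` and `p ∈ [1,∞]`, the `K`- and `J`-method spaces `(A₀,A₁)^K_{φ,p}` and
`(A₀,A₁)^J_{φ,p}` coincide, with equivalent norms. -/
theorem interpNormK_equiv_interpNormJ {E A₀ A₁ : Type*} [AddCommGroup E]
    [NormedAddCommGroup A₀] [NormedAddCommGroup A₁]
    (j₀ : A₀ →+ E) (j₁ : A₁ →+ E)
    (φ : ℝ → ℝ) (hφpos : ∀ t ∈ Set.Ioi (0:ℝ), 0 < φ t) (hφ : memIo φ 0 1)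
    (p : ℝ≥0∞) (hp : 1 ≤ p) :
    ∃ C > (0:ℝ), ∀ a : E,
      interpNormK φ p j₀ j₁ a ≤ ENNReal.ofReal C * interpNormJ φ p j₀ j₁ a ∧
      interpNormJ φ p j₀ j₁ a ≤ ENNReal.ofReal C * interpNormK φ p j₀ j₁ a := by
  obtain ⟨S, hS_top, hS⟩ := exists_forall_sPhi_le hφpos hφ 2
  set D₁ := 2 * S * ∑' k, dilationKernel φ k
  set D₂ := (S + 1) * (2 * S)
  have hD₁ : D₁ ≠ ∞ := ENNReal.mul_ne_top (ENNReal.mul_ne_top ENNReal.ofNat_ne_top hS_top)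
    (tsum_dilationKernel_ne_top hφpos hφ)
  have hD₂ : D₂ ≠ ∞ := ENNReal.mul_ne_top (ENNReal.add_ne_top.2 ⟨hS_top, ENNReal.one_ne_top⟩)
    (ENNReal.mul_ne_top ENNReal.ofNat_ne_top hS_top)
  have hKJ (a : E) : interpNormK φ p j₀ j₁ a ≤ D₁ * interpNormJ φ p j₀ j₁ a := by
    rw [mul_assoc]
    exact (interpNormK_le_eLpNorm_weightedK (one_pos.trans_le hp).ne' hφpos
      (fun l hl hl1 => hS l hl (hl1.trans one_le_two)) a).trans
      (mul_le_mul_right (eLpNorm_weightedK_le_interpNormJ hp hφpos hφ a) _)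
  have hJK (a : E) : interpNormJ φ p j₀ j₁ a ≤ D₂ * interpNormK φ p j₀ j₁ a := by
    rw [mul_assoc]
    exact (interpNormJ_le_eLpNorm_weightedK hp hφpos hφ hS_top (hS 2 two_pos le_rfl) a).trans
      (mul_le_mul_right (eLpNorm_weightedK_le_interpNormK hp hφpos hS_top hS a) _)
  have hC : D₁ ⊔ D₂ ≤ ENNReal.ofReal ((D₁ ⊔ D₂).toReal + 1) :=
    ENNReal.le_ofReal_iff_toReal_le (max_ne_top hD₁ hD₂) (by positivity) |>.2 (lt_add_one _).le
  exact ⟨(D₁ ⊔ D₂).toReal + 1, by positivity, fun a =>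
    ⟨(hKJ a).trans (mul_le_mul_left (le_sup_left.trans hC) _),
      (hJK a).trans (mul_le_mul_left (le_sup_right.trans hC) _)⟩⟩
end
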